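/- arXiv:2510.12261 — 2 statements merged into one kernel-verified Lean document; each statement's English description precedes it below -/
import Mathlib

section
/- One has det(C)² = (−1)^{(r−1)/2}·r^r in 𝔽, and (λ·C)² = (−1)^{(r−1)/2}·σ, where σ is the permutation matrix with (i,j)-entry 1 exactly when i = −j. -/
/-!
The rows of `C` are the shifts `x ↦ ψ (a * x)` of a primitive additive character `ψ`. They are
pairwise distinct characters, so `det C ≠ 0` by linear independence of characters, and their
orthogonality gives `C ^ 2 = r • σ`. Negation on an additive group of odd order fixes only `0`, so
`det σ = (-1) ^ ((r - 1) / 2)`, and taking determinants in `C ^ 2 = r • σ` yields `det C ^ 2`.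
Finally `λ ^ 2 * r = r ^ r / det C ^ 2` is the sign `(-1) ^ ((r - 1) / 2)`.
-/

theorem fixedPoints_neg_of_odd_card {G : Type*} [AddGroup G] (hG : Odd (Nat.card G)) :
    Function.fixedPoints (Equiv.neg G) = {0} := by
  ext x
  have two_nsmul_eq_zero : 2 • x = 0 ↔ x = 0 :=
    hG.coprime_two_right.nsmul_right_bijective.injective.eq_iff' (nsmul_zero 2)
  rw [Function.mem_fixedPoints, Function.IsFixedPt, Equiv.neg_apply, neg_eq_iff_add_eq_zero,
    ← two_nsmul, two_nsmul_eq_zero, Set.mem_singleton_iff]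

theorem sign_neg_of_odd_card {G : Type*} [AddGroup G] [Fintype G] [DecidableEq G]
    (hG : Odd (Fintype.card G)) :
    Equiv.Perm.sign (Equiv.neg G) = (-1) ^ ((Fintype.card G - 1) / 2) := by
  have neg_sq : Equiv.neg G ^ 2 = 1 := by
    ext x
    simp [pow_two]
  have card_fixedPoints : Fintype.card (Function.fixedPoints (Equiv.neg G)) = 1 := by
    rw [← Nat.card_eq_fintype_card, fixedPoints_neg_of_odd_card (by rwa [Nat.card_eq_fintype_card]),
      Nat.card_unique]
  rw [Equiv.Perm.sign_of_pow_two_eq_one neg_sq, card_fixedPoints]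

theorem permMatrix_neg_apply {G α : Type*} [InvolutiveNeg G] [DecidableEq G] [Zero α] [One α]
    (i j : G) :
    (Equiv.neg G).permMatrix α i j = if i = -j then 1 else 0 := by
  simp [Equiv.Perm.permMatrix, PEquiv.toMatrix_apply, neg_eq_iff_eq_neg]

/-- The matrix of the Fourier transform on the additive group of `R` with respect to the additive
character `ψ`. The matrix `C` of the theorem is the case `R = ZMod r`, `ψ x = θ ^ x.val`. -/
def fourierMatrix {R S : Type*} [Semiring R] [Monoid S] (ψ : AddChar R S) : Matrix R R S :=
  Matrix.of fun i j => ψ (i * j)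

section Fourier

variable {R S : Type*} [CommRing R] [CommRing S] [IsDomain S] {ψ : AddChar R S}

theorem linearIndependent_mulShift (hψ : ψ.IsPrimitive) :
    LinearIndependent S fun a => ⇑(ψ.mulShift a) :=
  (linearIndependent_monoidHom (Multiplicative R) S).comp
    (fun a => (ψ.mulShift a).toMonoidHom)
    (AddChar.toMonoidHomEquiv.injective.comp (AddChar.to_mulShift_inj_of_isPrimitive hψ))

variable [Fintype R] [DecidableEq R]

theorem det_fourierMatrix_ne_zero (hψ : ψ.IsPrimitive) : (fourierMatrix ψ).det ≠ 0 := by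
  have rows_independent : LinearIndependent S (fourierMatrix ψ).row :=
    linearIndependent_mulShift hψ
  rw [← Matrix.vecMul_injective_iff] at rows_independent
  intro det_eq_zero
  obtain ⟨v, hv, hvC⟩ := Matrix.exists_vecMul_eq_zero_iff.2 det_eq_zero
  exact hv (rows_independent (hvC.trans (Matrix.zero_vecMul _).symm))

theorem fourierMatrix_mul_self (hψ : ψ.IsPrimitive) :
    fourierMatrix ψ * fourierMatrix ψ =
      (Fintype.card R : S) • (Equiv.neg R).permMatrix S := by
  ext i j
  calc (fourierMatrix ψ * fourierMatrix ψ) i j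
      = ∑ k, ψ (k * (i + j)) := Finset.sum_congr rfl fun k _ => by
        rw [mul_add, AddChar.map_add_eq_mul, mul_comm k i]
        rfl
    _ = if i + j = 0 then (Fintype.card R : S) else 0 := by
        rw [AddChar.sum_mulShift _ hψ, Nat.cast_ite, Nat.cast_zero]
    _ = ((Fintype.card R : S) • (Equiv.neg R).permMatrix S) i j := by
        rw [Matrix.smul_apply, permMatrix_neg_apply]
        simp [eq_neg_iff_add_eq_zero]

theorem det_fourierMatrix_sq (hR : Odd (Fintype.card R)) (hψ : ψ.IsPrimitive) :
    (fourierMatrix ψ).det ^ 2 =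
      (-1) ^ ((Fintype.card R - 1) / 2) * (Fintype.card R : S) ^ Fintype.card R := by
  rw [pow_two, ← Matrix.det_mul, fourierMatrix_mul_self hψ, Matrix.det_smul,
    Matrix.det_permutation, sign_neg_of_odd_card hR, mul_comm]
  simp

end Fourier

section Normalization

variable {R 𝔽 : Type*} [CommRing R] [Fintype R] [DecidableEq R] [Field 𝔽] {ψ : AddChar R 𝔽}

theorem normalizing_scalar_sq_mul_card (hR : Odd (Fintype.card R)) (hψ : ψ.IsPrimitive) :
    ((-(Fintype.card R : 𝔽)) ^ ((Fintype.card R - 1) / 2) * (fourierMatrix ψ).det⁻¹) ^ 2 *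
      Fintype.card R = (-1) ^ ((Fintype.card R - 1) / 2) := by
  have det_sq := det_fourierMatrix_sq hR hψ
  have det_ne_zero := det_fourierMatrix_ne_zero hψ
  obtain ⟨m, hm⟩ := hR
  have half : (Fintype.card R - 1) / 2 = m := by omega
  rw [half] at det_sq ⊢
  set q : 𝔽 := (Fintype.card R : 𝔽)
  have q_pow : (-q) ^ (m * 2) * q = q ^ Fintype.card R := by
    rw [hm, pow_succ, mul_comm m, (even_two_mul m).neg_pow]
  calc ((-q) ^ m * (fourierMatrix ψ).det⁻¹) ^ 2 * q
      = (-q) ^ (m * 2) * q / (fourierMatrix ψ).det ^ 2 := by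
        rw [pow_mul]
        field_simp
    _ = (-1) ^ m * (fourierMatrix ψ).det ^ 2 / (fourierMatrix ψ).det ^ 2 := by
        rw [q_pow, det_sq, ← mul_assoc, ← mul_pow, neg_one_mul, neg_neg, one_pow, one_mul]
    _ = (-1) ^ m := mul_div_cancel_right₀ _ (pow_ne_zero 2 det_ne_zero)

theorem weil_detC_sq_and_lamC_sq_general (hR : Odd (Fintype.card R)) (hψ : ψ.IsPrimitive)
    (C : Matrix R R 𝔽) (hC : ∀ i j, C i j = ψ (i * j))
    (lam : 𝔽) (hlam : lam = (-(Fintype.card R : 𝔽)) ^ ((Fintype.card R - 1) / 2) * C.det⁻¹)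
    (σ : Matrix R R 𝔽) (hσ : ∀ i j, σ i j = if i = -j then 1 else 0) :
    C.det ^ 2 = (-1) ^ ((Fintype.card R - 1) / 2) * (Fintype.card R : 𝔽) ^ Fintype.card R ∧
      (lam • C) * (lam • C) = ((-1 : 𝔽) ^ ((Fintype.card R - 1) / 2)) • σ := by
  obtain rfl : C = fourierMatrix ψ := Matrix.ext hC
  obtain rfl : σ = (Equiv.neg R).permMatrix 𝔽 :=
    Matrix.ext fun i j => (hσ i j).trans (permMatrix_neg_apply i j).symm
  refine ⟨det_fourierMatrix_sq hR hψ, ?_⟩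
  rw [Matrix.smul_mul, Matrix.mul_smul, smul_smul, fourierMatrix_mul_self hψ, smul_smul,
    ← pow_two, hlam, normalizing_scalar_sq_mul_card hR hψ]

end Normalization

/-- `det(C)² = (−1)^((r−1)/2)·r^r` and `(λC)² = (−1)^((r−1)/2)·σ`. -/
theorem weil_detC_sq_and_lamC_sq
    {r : ℕ} [Fact (Nat.Prime r)] (hr : Odd r)
    {𝔽 : Type*} [Field 𝔽] {θ : 𝔽} (hθ : IsPrimitiveRoot θ r)
    (C : Matrix (ZMod r) (ZMod r) 𝔽)
    (hC : ∀ i j : ZMod r, C i j = θ ^ (i * j).val)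
    (lam : 𝔽) (hlam : lam = (-(r : 𝔽)) ^ ((r - 1) / 2) * C.det⁻¹)
    (σ : Matrix (ZMod r) (ZMod r) 𝔽)
    (hσ : ∀ i j : ZMod r, σ i j = if i = -j then 1 else 0) :
    C.det ^ 2 = (-1 : 𝔽) ^ ((r - 1) / 2) * (r : 𝔽) ^ r ∧
      (lam • C) * (lam • C) = ((-1 : 𝔽) ^ ((r - 1) / 2)) • σ := by
  simpa only [ZMod.card] using weil_detC_sq_and_lamC_sq_general (by rwa [ZMod.card])
    (AddChar.zmodChar_primitive_of_primitive_root r hθ) C hC lam (by rwa [ZMod.card]) σ hσ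
end

section
/- The matrix σ satisfies σ·σ = 1, and σ normalizes R acting by inversion modulo the center: σ·A_t·σ·A_t = 1 and σ·B_t·σ·B_t = 1 for all 1 ≤ t ≤ ℓ, and consequently for every x ∈ R the element σ·x·σ lies in R and σ·x·σ·x lies in the subgroup generated by the scalar unit θ·I. -/
/-!
For a finite abelian group `V`, the diagonal matrices of characters `χ` and the matrices of
translations by `v` commute up to the scalars `χ v`, while the matrix of `η ↦ -η` inverts both
kinds under conjugation. Modulo these scalars conjugation by that matrix and inversion are thus
two homomorphisms on a commutative group which agree on the generators, so they agree everywhere.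
The theorem is the case `V = (ZMod r) ^ ℓ`, with the characters `ξ ↦ θ ^ ξ t` and the
translations by the standard basis vectors.
-/

open scoped commutatorElement

section Group

variable {G H : Type*} [Group G] [Group H] {S : Set G}

theorem commute_map_of_mem_closure {f : G →* H}
    (hcomm : ∀ x ∈ S, ∀ y ∈ S, Commute (f x) (f y)) {x y : G}
    (hx : x ∈ Subgroup.closure S) (hy : y ∈ Subgroup.closure S) : Commute (f x) (f y) := by
  induction hx, hy using Subgroup.closure_induction₂ with
  | mem x y hx hy => exact hcomm x hx y hy
  | one_left y hy => rw [map_one]; exact .one_left _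
  | one_right x hx => rw [map_one]; exact .one_right _
  | mul_left x y z _ _ _ hxz hyz => rw [map_mul]; exact hxz.mul_left hyz
  | mul_right x y z _ _ _ hxy hxz => rw [map_mul]; exact hxy.mul_right hxz
  | inv_left x y _ _ hxy => rw [map_inv]; exact hxy.inv_left
  | inv_right x y _ _ hxy => rw [map_inv]; exact hxy.inv_right

theorem map_eq_inv_map_of_mem_closure {f g : G →* H}
    (hcomm : ∀ x ∈ S, ∀ y ∈ S, Commute (f x) (f y)) (hfg : ∀ x ∈ S, g x = (f x)⁻¹) {x : G}
    (hx : x ∈ Subgroup.closure S) : g x = (f x)⁻¹ := by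
  induction hx using Subgroup.closure_induction with
  | mem x hx => exact hfg x hx
  | one => simp only [map_one, inv_one]
  | mul x y hx hy ihx ihy =>
    rw [map_mul, map_mul, ihx, ihy, (commute_map_of_mem_closure hcomm hx hy).eq, mul_inv_rev]
  | inv x _ ih => rw [map_inv, map_inv, ih]

theorem map_mem_closure_of_map_eq_inv {φ : G →* G} (hφ : ∀ x ∈ S, φ x = x⁻¹) {x : G}
    (hx : x ∈ Subgroup.closure S) : φ x ∈ Subgroup.closure S := by
  have closure_le : Subgroup.closure S ≤ (Subgroup.closure S).comap φ := by
    refine (Subgroup.closure_le _).2 fun y hy => ?_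
    rw [SetLike.mem_coe, Subgroup.mem_comap, hφ y hy]
    exact inv_mem (Subgroup.subset_closure hy)
  exact closure_le hx

theorem map_mul_self_mem_of_mem_closure {Z : Subgroup G} [Z.Normal] {φ : G →* G}
    (hcomm : ∀ x ∈ S, ∀ y ∈ S, ⁅x, y⁆ ∈ Z) (hφ : ∀ x ∈ S, φ x = x⁻¹) {x : G}
    (hx : x ∈ Subgroup.closure S) : φ x * x ∈ Z := by
  let π := QuotientGroup.mk' Z
  have commute_mod : ∀ x ∈ S, ∀ y ∈ S, Commute (π x) (π y) := fun x hx y hy => by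
    rw [← commutatorElement_eq_one_iff_commute, ← map_commutatorElement]
    exact (QuotientGroup.eq_one_iff _).2 (hcomm x hx y hy)
  have inverts_mod : (π.comp φ) x = (π x)⁻¹ :=
    map_eq_inv_map_of_mem_closure commute_mod
      (fun y hy => by rw [MonoidHom.comp_apply, hφ y hy, map_inv]) hx
  refine (QuotientGroup.eq_one_iff _).1 (?_ : π (φ x * x) = 1)
  rw [map_mul, ← MonoidHom.comp_apply, inverts_mod, inv_mul_cancel]

theorem conj_mem_closure_and_conj_mul_self_mem {Z : Subgroup G} [Z.Normal] {s : G} (hs : s * s = 1)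
    (hcomm : ∀ x ∈ S, ∀ y ∈ S, ⁅x, y⁆ ∈ Z) (hinv : ∀ x ∈ S, s * x * s * x = 1) {x : G}
    (hx : x ∈ Subgroup.closure S) :
    s * x * s ∈ Subgroup.closure S ∧ s * x * s * x ∈ Z := by
  have conj_apply (y : G) : MulAut.conj s y = s * y * s := by
    rw [MulAut.conj_apply, inv_eq_of_mul_eq_one_left hs]
  have conj_eq_inv : ∀ y ∈ S, (MulAut.conj s).toMonoidHom y = y⁻¹ := fun y hy =>
    (conj_apply y).trans (eq_inv_of_mul_eq_one_left (hinv y hy))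
  rw [← conj_apply]
  exact ⟨map_mem_closure_of_map_eq_inv conj_eq_inv hx,
    map_mul_self_mem_of_mem_closure hcomm conj_eq_inv hx⟩

theorem normal_closure_singleton_of_mem_center {z : G} (hz : z ∈ Subgroup.center G) :
    (Subgroup.closure {z}).Normal := by
  have le_center : Subgroup.closure {z} ≤ Subgroup.center G := by
    rwa [Subgroup.closure_le, Set.singleton_subset_iff]
  refine ⟨fun x hx g => ?_⟩
  rwa [Subgroup.mem_center_iff.1 (le_center hx) g, mul_inv_cancel_right]

end Group

section Matrix

variable {V K : Type*} [Fintype V] [DecidableEq V]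

theorem permMatrixHom_apply_apply [NonAssocSemiring K] (f : Equiv.Perm V) (η ξ : V) :
    Matrix.permMatrixHom (R := K) f η ξ = if η = f ξ then 1 else 0 := by
  rw [Matrix.permMatrixHom_apply, Equiv.Perm.permMatrix, PEquiv.toMatrix_apply]
  exact if_congr (Option.mem_some_iff.trans Equiv.Perm.inv_eq_iff_eq) rfl rfl

theorem permMatrixHom_mul_diagonal [NonAssocSemiring K] (f : Equiv.Perm V) (d : V → K) :
    Matrix.permMatrixHom f * Matrix.diagonal d =
      Matrix.diagonal (d ∘ f.symm) * Matrix.permMatrixHom f := by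
  ext η ξ
  rw [Matrix.mul_diagonal, Matrix.diagonal_mul, permMatrixHom_apply_apply]
  split_ifs with h
  · simp [h]
  · simp

theorem mem_center_of_coe_eq_smul_one [CommSemiring K] {c : K} {z : (Matrix V V K)ˣ}
    (hz : (z : Matrix V V K) = c • 1) :
    z ∈ Subgroup.center (Matrix V V K)ˣ :=
  Subgroup.mem_center_iff.2 fun g => Units.ext (by simp [hz])

variable [AddCommGroup V]

/-- The multiplication operator by a character `χ` on functions `V → K`, as an invertible
diagonal matrix. -/
def modulationMatrix [CommSemiring K] : AddChar V K →* (Matrix V V K)ˣ :=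
  MonoidHom.toHomUnits
    { toFun := fun χ => Matrix.diagonal χ
      map_one' := Matrix.diagonal_one
      map_mul' := fun χ ψ => (Matrix.diagonal_mul_diagonal χ ψ).symm }

/-- The permutation matrix of the translation `ξ ↦ ξ + v`, as an invertible matrix; columns are
indexed by the source. -/
def translationMatrix (K : Type*) [Semiring K] (v : V) : (Matrix V V K)ˣ :=
  Matrix.permMatrixHom.toHomUnits (Equiv.addRight v)

/-- The permutation matrix of `ξ ↦ -ξ`, as an invertible matrix. -/
def reflectionMatrix (V K : Type*) [Fintype V] [DecidableEq V] [AddCommGroup V] [Semiring K] :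
    (Matrix V V K)ˣ :=
  Matrix.permMatrixHom.toHomUnits (Equiv.neg V)

section Semiring

variable [Semiring K]

theorem translationMatrix_apply (v η ξ : V) :
    (translationMatrix K v : Matrix V V K) η ξ = if η = ξ + v then 1 else 0 :=
  permMatrixHom_apply_apply ..

theorem reflectionMatrix_apply (η ξ : V) :
    (reflectionMatrix V K : Matrix V V K) η ξ = if η = -ξ then 1 else 0 :=
  permMatrixHom_apply_apply ..

theorem translationMatrix_commute (v w : V) :
    Commute (translationMatrix K v) (translationMatrix K w) :=
  Commute.map (by ext ξ; exact add_right_comm ξ w v) _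

theorem reflectionMatrix_mul_self : reflectionMatrix V K * reflectionMatrix V K = 1 := by
  have neg_mul_neg : (Equiv.neg V : Equiv.Perm V) * Equiv.neg V = 1 := by ext ξ; exact neg_neg ξ
  rw [reflectionMatrix, ← map_mul, neg_mul_neg, map_one]

theorem reflectionMatrix_inverts_translationMatrix (v : V) :
    reflectionMatrix V K * translationMatrix K v * reflectionMatrix V K *
      translationMatrix K v = 1 := by
  have neg_inverts_add :
      (Equiv.neg V : Equiv.Perm V) * Equiv.addRight v * Equiv.neg V * Equiv.addRight v = 1 := by
    ext ξ
    simp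
  rw [reflectionMatrix, translationMatrix, ← map_mul, ← map_mul, ← map_mul, neg_inverts_add,
    map_one]

end Semiring

section CommSemiring

variable [CommSemiring K] (χ : AddChar V K) (v : V)

theorem coe_modulationMatrix : (modulationMatrix χ : Matrix V V K) = Matrix.diagonal χ := rfl

theorem reflectionMatrix_mul_modulationMatrix :
    reflectionMatrix V K * modulationMatrix χ = modulationMatrix χ⁻¹ * reflectionMatrix V K :=
  Units.ext (permMatrixHom_mul_diagonal (Equiv.neg V) χ)

theorem reflectionMatrix_inverts_modulationMatrix :
    reflectionMatrix V K * modulationMatrix χ * reflectionMatrix V K * modulationMatrix χ = 1 := by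
  rw [reflectionMatrix_mul_modulationMatrix, mul_assoc (modulationMatrix χ⁻¹),
    reflectionMatrix_mul_self, mul_one, ← map_mul, inv_mul_cancel, map_one]

theorem modulationMatrix_mul_translationMatrix :
    (modulationMatrix χ * translationMatrix K v : Matrix V V K) =
      χ v • (translationMatrix K v * modulationMatrix χ : Matrix V V K) := by
  ext η ξ
  rw [coe_modulationMatrix, Matrix.smul_apply, Matrix.diagonal_mul, Matrix.mul_diagonal,
    translationMatrix_apply]
  split_ifs with h
  · simp [h, AddChar.map_add_eq_mul, mul_comm]
  · simp

variable {χ v} {θ : K} {θI : (Matrix V V K)ˣ}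

theorem commutator_modulationMatrix_translationMatrix_mem_closure
    (hθI : (θI : Matrix V V K) = θ • 1) (hχv : χ v ∈ Submonoid.powers θ) :
    ⁅modulationMatrix χ, translationMatrix K v⁆ ∈ Subgroup.closure {θI} := by
  obtain ⟨n, hn⟩ := hχv
  have mul_eq : modulationMatrix χ * translationMatrix K v =
      θI ^ n * (translationMatrix K v * modulationMatrix χ) := by
    ext1
    simp only [Units.val_mul, Units.val_pow_eq_pow_val, modulationMatrix_mul_translationMatrix,
      hθI, smul_pow, one_pow, smul_mul_assoc, one_mul, hn]
  have commutator_eq : ⁅modulationMatrix χ, translationMatrix K v⁆ = θI ^ n := by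
    rw [commutatorElement_def, mul_eq]
    group
  rw [commutator_eq]
  exact pow_mem (Subgroup.mem_closure_singleton_self θI) n

theorem commutator_mem_closure_of_mem_range_modulation_union_translation
    {ι κ : Type*} {χ : ι → AddChar V K} {v : κ → V}
    (hθI : (θI : Matrix V V K) = θ • 1) (hχv : ∀ i j, χ i (v j) ∈ Submonoid.powers θ) :
    ∀ x ∈ Set.range (modulationMatrix ∘ χ) ∪ Set.range (translationMatrix K ∘ v),
    ∀ y ∈ Set.range (modulationMatrix ∘ χ) ∪ Set.range (translationMatrix K ∘ v),
      ⁅x, y⁆ ∈ Subgroup.closure {θI} := by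
  have mem_of_commute {x y : (Matrix V V K)ˣ} (hxy : Commute x y) :
      ⁅x, y⁆ ∈ Subgroup.closure {θI} := by
    rw [hxy.commutator_eq]
    exact one_mem _
  rintro _ (⟨i, rfl⟩ | ⟨j, rfl⟩) _ (⟨i', rfl⟩ | ⟨j', rfl⟩)
  · exact mem_of_commute ((Commute.all _ _).map modulationMatrix)
  · exact commutator_modulationMatrix_translationMatrix_mem_closure hθI (hχv i j')
  · rw [← commutatorElement_inv]
    exact inv_mem (commutator_modulationMatrix_translationMatrix_mem_closure hθI (hχv i' j))
  · exact mem_of_commute (translationMatrix_commute (v j) (v j'))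

end CommSemiring

end Matrix

section Coordinates

variable {ι : Type*}

theorem eq_add_single_iff [DecidableEq ι] {M : ι → Type*} [∀ i, AddZeroClass (M i)] {i : ι}
    {a : M i} {x y : ∀ i, M i} :
    x = y + Pi.single i a ↔ x i = y i + a ∧ ∀ j, j ≠ i → x j = y j := by
  rw [funext_iff]
  refine ⟨fun h => ⟨by simp [h], fun j hj => by simp [h, hj]⟩, fun ⟨hi, hne⟩ j => ?_⟩
  obtain rfl | hj := eq_or_ne j i
  · simp [hi]
  · simp [hne j hj, hj]

variable {r : ℕ} [NeZero r] {K : Type*} [CommMonoid K] {θ : K}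

/-- The character `ξ ↦ θ ^ ξ t` of `(ZMod r) ^ ι`, whose modulation matrix is `A_t`. -/
def coordChar (hθ : θ ^ r = 1) (t : ι) : AddChar (ι → ZMod r) K :=
  (AddChar.zmodChar r hθ).compAddMonoidHom (Pi.evalAddMonoidHom _ t)

theorem coordChar_mem_powers (hθ : θ ^ r = 1) (t : ι) (ξ : ι → ZMod r) :
    coordChar hθ t ξ ∈ Submonoid.powers θ :=
  ⟨(ξ t).val, rfl⟩

end Coordinates

theorem weil_sigma_inverts_R_general
    {V K ι κ : Type*} [AddCommGroup V] [Fintype V] [DecidableEq V] [CommSemiring K]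
    {θ : K} {χ : ι → AddChar V K} {v : κ → V} (hχv : ∀ i j, χ i (v j) ∈ Submonoid.powers θ)
    (uA : ι → (Matrix V V K)ˣ) (uB : κ → (Matrix V V K)ˣ)
    (huA : ∀ i, (uA i : Matrix V V K) = Matrix.diagonal (χ i))
    (huB : ∀ j η ξ, (uB j : Matrix V V K) η ξ = if η = ξ + v j then 1 else 0)
    (σ : (Matrix V V K)ˣ) (hσ : ∀ η ξ, (σ : Matrix V V K) η ξ = if η = -ξ then 1 else 0)
    (θI : (Matrix V V K)ˣ) (hθI : (θI : Matrix V V K) = θ • 1)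
    (R : Subgroup (Matrix V V K)ˣ) (hR : R = Subgroup.closure (Set.range uA ∪ Set.range uB)) :
    σ * σ = 1 ∧
      (∀ i, σ * uA i * σ * uA i = 1) ∧
      (∀ j, σ * uB j * σ * uB j = 1) ∧
      ∀ x ∈ R, σ * x * σ ∈ R ∧ σ * x * σ * x ∈ Subgroup.closure {θI} := by
  obtain rfl : uA = modulationMatrix ∘ χ := funext fun i => Units.ext (huA i)
  obtain rfl : uB = translationMatrix K ∘ v := funext fun j => Units.ext <|
    Matrix.ext fun η ξ => (huB j η ξ).trans (translationMatrix_apply (v j) η ξ).symm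
  obtain rfl : σ = reflectionMatrix V K := Units.ext <|
    Matrix.ext fun η ξ => (hσ η ξ).trans (reflectionMatrix_apply η ξ).symm
  subst hR
  have inverts_modulation i := reflectionMatrix_inverts_modulationMatrix (χ i)
  have inverts_translation j := reflectionMatrix_inverts_translationMatrix (K := K) (v j)
  have : (Subgroup.closure {θI}).Normal :=
    normal_closure_singleton_of_mem_center (mem_center_of_coe_eq_smul_one hθI)
  refine ⟨reflectionMatrix_mul_self, inverts_modulation, inverts_translation, fun x hx =>
    conj_mem_closure_and_conj_mul_self_mem reflectionMatrix_mul_self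
      (commutator_mem_closure_of_mem_range_modulation_union_translation hθI hχv) ?_ hx⟩
  rintro _ (⟨i, rfl⟩ | ⟨j, rfl⟩)
  · exact inverts_modulation i
  · exact inverts_translation j

/-- `σ² = 1`, `σ` inverts the generators `A_t, B_t` of `R` modulo the center, and hence
for every `x ∈ R` we have `σxσ ∈ R` and `σxσx ∈ ⟨θ·I⟩`. -/
theorem weil_sigma_inverts_R
    {r : ℕ} [Fact (Nat.Prime r)] (hr : Odd r)
    {𝔽 : Type*} [Field 𝔽] {θ : 𝔽} (hθ : IsPrimitiveRoot θ r)
    {ℓ : ℕ} (hℓ : 1 ≤ ℓ)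
    (uA uB : Fin ℓ → (Matrix (Fin ℓ → ZMod r) (Fin ℓ → ZMod r) 𝔽)ˣ)
    (huA : ∀ t, (uA t : Matrix (Fin ℓ → ZMod r) (Fin ℓ → ZMod r) 𝔽)
      = Matrix.diagonal fun ξ => θ ^ (ξ t).val)
    (huB : ∀ t η ξ, (uB t : Matrix (Fin ℓ → ZMod r) (Fin ℓ → ZMod r) 𝔽) η ξ
      = if η t = ξ t + 1 ∧ ∀ i, i ≠ t → η i = ξ i then 1 else 0)
    (σ : (Matrix (Fin ℓ → ZMod r) (Fin ℓ → ZMod r) 𝔽)ˣ)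
    (hσ : ∀ η ξ, (σ : Matrix (Fin ℓ → ZMod r) (Fin ℓ → ZMod r) 𝔽) η ξ
      = if η = -ξ then 1 else 0)
    (θI : (Matrix (Fin ℓ → ZMod r) (Fin ℓ → ZMod r) 𝔽)ˣ)
    (hθI : (θI : Matrix (Fin ℓ → ZMod r) (Fin ℓ → ZMod r) 𝔽) = θ • 1)
    (R : Subgroup (Matrix (Fin ℓ → ZMod r) (Fin ℓ → ZMod r) 𝔽)ˣ)
    (hR : R = Subgroup.closure (Set.range uA ∪ Set.range uB)) :
    σ * σ = 1 ∧
      (∀ t, σ * uA t * σ * uA t = 1) ∧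
      (∀ t, σ * uB t * σ * uB t = 1) ∧
      ∀ x ∈ R, σ * x * σ ∈ R ∧ σ * x * σ * x ∈ Subgroup.closure {θI} :=
  weil_sigma_inverts_R_general (χ := coordChar hθ.pow_eq_one) (fun _ _ => coordChar_mem_powers ..)
    uA uB huA (fun t η ξ => (huB t η ξ).trans (if_congr eq_add_single_iff.symm rfl rfl))
    σ hσ θI hθI R hR
end
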